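/- Let ψ : Ω → ℝ be an eigenvector of H with eigenvalue E and set E' := E + K. Then t·Σ_{{α,β} edge of G} u(α)·u(β)·(ψ(α)/u(α) − ψ(β)/u(β))² + Σ_{α∈Ω} ψ(α)²/u(α) = E'·Σ_{α∈Ω} ψ(α)², where the first sum runs over the unordered edges of G, each counted once. (The quadratic-form identity exhibiting 1/u as an effective confining potential.) -/

import Mathlib

open Matrix Finset

/-!
An edge `{α, β}` contributes `u α * u β * (ψ α / u α - ψ β / u β) ^ 2`, which is `f α β + f β α` for
`f α β = ψ α ^ 2 / u α * u β - ψ α * ψ β`. Summing over edges therefore gives the sum of `f` over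
ordered pairs of neighbours, so for `M = diagonal V - t • A` with `A` the adjacency matrix, the
form `ψ ⬝ᵥ M *ᵥ ψ` equals `t` times the edge sum plus `∑ α, ψ α ^ 2 / u α * (M *ᵥ u) α`; the
diagonal part of `M` cancels. For the landscape, `M = H + K` and `M *ᵥ u = 1`.
-/

section EdgeSums

variable {Ω M : Type*} [Fintype Ω] [AddCommMonoid M] (G : SimpleGraph Ω) [DecidableRel G.Adj]

theorem sum_dart_eq_sum_sum_neighborFinset (f : Ω → Ω → M) :
    ∑ d : G.Dart, f d.fst d.snd = ∑ α, ∑ β ∈ G.neighborFinset α, f α β := by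
  rw [Finset.sum_sigma']
  refine Finset.sum_bij' (fun d _ => ⟨d.fst, d.snd⟩)
    (fun p hp => ⟨(p.1, p.2), by simpa using hp⟩) ?_ ?_ ?_ ?_ ?_ <;> simp [SimpleGraph.Dart.adj]

theorem sum_dart_edge_eq [DecidableEq Ω] (f : Ω → Ω → M) {e : Sym2 Ω} (he : e ∈ G.edgeFinset) :
    ∑ d : G.Dart with d.edge = e, f d.fst d.snd =
      Sym2.lift ⟨fun α β => f α β + f β α, fun _ _ => add_comm _ _⟩ e := by
  induction e with
  | _ α β =>
    let d : G.Dart := ⟨(α, β), by simpa using he⟩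
    change ∑ d' : G.Dart with d'.edge = d.edge, f d'.fst d'.snd = f α β + f β α
    rw [d.edge_fiber, Finset.sum_pair d.symm_ne.symm]
    rfl

theorem sum_edgeFinset_lift_add_swap (f : Ω → Ω → M) :
    ∑ e ∈ G.edgeFinset, Sym2.lift ⟨fun α β => f α β + f β α, fun _ _ => add_comm _ _⟩ e =
      ∑ α, ∑ β ∈ G.neighborFinset α, f α β := by
  classical
  have edge_mem : ∀ d ∈ (univ : Finset G.Dart), d.edge ∈ G.edgeFinset := fun d _ =>
    SimpleGraph.mem_edgeFinset.mpr d.edge_mem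
  rw [← sum_dart_eq_sum_sum_neighborFinset, ← Finset.sum_fiberwise_of_maps_to edge_mem]
  exact Finset.sum_congr rfl fun e he => (sum_dart_edge_eq G f he).symm

end EdgeSums

theorem mul_mul_div_sub_div_sq {𝕜 : Type*} [Field 𝕜] {a b : 𝕜} (ha : a ≠ 0) (hb : b ≠ 0)
    (x y : 𝕜) :
    a * b * (x / a - y / b) ^ 2 = (x ^ 2 / a * b - x * y) + (y ^ 2 / b * a - y * x) := by
  field_simp
  ring

theorem mulVec_eq_of_eq_nonsing_inv_mulVec {n R : Type*} [Fintype n] [DecidableEq n] [CommRing R]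
    {A : Matrix n n R} {u b : n → R} (hu : u = A⁻¹ *ᵥ b) (hu_ne : u ≠ 0) : A *ᵥ u = b := by
  -- A singular `A` has the junk inverse `0`, which would force `u = 0`.
  have det_isUnit : IsUnit A.det := by
    by_contra hA
    exact hu_ne (by rw [hu, nonsing_inv_apply_not_isUnit A hA, zero_mulVec])
  rw [hu, mulVec_mulVec, mul_nonsing_inv A det_isUnit, one_mulVec]

section DirichletForm

variable {Ω 𝕜 : Type*} [Fintype Ω] [Field 𝕜] (G : SimpleGraph Ω) [DecidableRel G.Adj]

/-- The Dirichlet form of `ψ / u` on the graph `G`, with conductance `u α * u β` on the edge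
`{α, β}`; each unordered edge is counted once. It is the kinetic part of the energy of `ψ`
relative to `u`. -/
def relativeDirichletForm (u ψ : Ω → 𝕜) : 𝕜 :=
  ∑ e ∈ G.edgeFinset,
    Sym2.lift ⟨fun α β => u α * u β * (ψ α / u α - ψ β / u β) ^ 2, fun α β => by ring⟩ e

theorem relativeDirichletForm_eq_sub {u : Ω → 𝕜} (hu : ∀ α, u α ≠ 0) (ψ : Ω → 𝕜) :
    relativeDirichletForm G u ψ =
      ∑ α, ψ α ^ 2 / u α * (G.adjMatrix 𝕜 *ᵥ u) α - ψ ⬝ᵥ G.adjMatrix 𝕜 *ᵥ ψ := by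
  calc relativeDirichletForm G u ψ
    _ = ∑ α, ∑ β ∈ G.neighborFinset α, (ψ α ^ 2 / u α * u β - ψ α * ψ β) := by
      simp only [relativeDirichletForm, mul_mul_div_sub_div_sq (hu _) (hu _)]
      exact sum_edgeFinset_lift_add_swap G fun α β => ψ α ^ 2 / u α * u β - ψ α * ψ β
    _ = ∑ α, ψ α ^ 2 / u α * (G.adjMatrix 𝕜 *ᵥ u) α - ψ ⬝ᵥ G.adjMatrix 𝕜 *ᵥ ψ := by
      simp only [dotProduct, SimpleGraph.adjMatrix_mulVec_apply, Finset.mul_sum,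
        Finset.sum_sub_distrib]

end DirichletForm

section HoppingHamiltonian

variable {Ω R : Type*} [DecidableEq Ω] [Ring R] (G : SimpleGraph Ω) [DecidableRel G.Adj]

/-- The Hamiltonian on the vertices of `G` with hopping amplitude `t` and potential `V`, written
through the adjacency matrix so that it acts on vectors by neighbour sums. -/
def hoppingHamiltonian (t : R) (V : Ω → R) : Matrix Ω Ω R :=
  diagonal V - t • G.adjMatrix R

theorem eq_hoppingHamiltonian {t : R} {V : Ω → R} {H : Matrix Ω Ω R}
    (hH : ∀ α β, H α β = if α = β then V α else if G.Adj α β then -t else 0) :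
    H = hoppingHamiltonian G t V := by
  ext α β
  rcases eq_or_ne α β with rfl | hne
  · simp [hoppingHamiltonian, hH]
  · by_cases hadj : G.Adj α β <;> simp [hoppingHamiltonian, hH, hne, hadj]

theorem hoppingHamiltonian_add_smul_one (t : R) (V : Ω → R) (K : R) :
    hoppingHamiltonian G t V + K • 1 = hoppingHamiltonian G t (fun α => V α + K) := by
  rw [hoppingHamiltonian, hoppingHamiltonian, smul_one_eq_diagonal, sub_add_eq_add_sub,
    diagonal_add]

theorem hoppingHamiltonian_mulVec_apply [Fintype Ω] (t : R) (V v : Ω → R) (α : Ω) :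
    (hoppingHamiltonian G t V *ᵥ v) α = V α * v α - t * (G.adjMatrix R *ᵥ v) α := by
  simp only [hoppingHamiltonian, sub_mulVec, smul_mulVec, Pi.sub_apply, Pi.smul_apply,
    mulVec_diagonal, smul_eq_mul]

end HoppingHamiltonian

section QuadraticForm

variable {Ω 𝕜 : Type*} [Fintype Ω] [DecidableEq Ω] [Field 𝕜]
  (G : SimpleGraph Ω) [DecidableRel G.Adj]

theorem dotProduct_hoppingHamiltonian_mulVec (t : 𝕜) (V : Ω → 𝕜) {u : Ω → 𝕜}
    (hu : ∀ α, u α ≠ 0) (ψ : Ω → 𝕜) :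
    ψ ⬝ᵥ hoppingHamiltonian G t V *ᵥ ψ =
      t * relativeDirichletForm G u ψ +
        ∑ α, ψ α ^ 2 / u α * (hoppingHamiltonian G t V *ᵥ u) α := by
  simp only [relativeDirichletForm_eq_sub G hu, dotProduct, hoppingHamiltonian_mulVec_apply,
    mul_sub, Finset.mul_sum, ← Finset.sum_sub_distrib, ← Finset.sum_add_distrib]
  refine Finset.sum_congr rfl fun α _ => ?_
  have := hu α
  field_simp
  ring

theorem mbll_quadratic_form_identity_general {t : 𝕜} {V : Ω → 𝕜} {K : 𝕜} {H : Matrix Ω Ω 𝕜}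
    (hH : ∀ α β, H α β = if α = β then V α else if G.Adj α β then -t else 0)
    {u : Ω → 𝕜} (hu : (H + K • (1 : Matrix Ω Ω 𝕜)) *ᵥ u = fun _ => 1) (hu_ne : ∀ α, u α ≠ 0)
    {ψ : Ω → 𝕜} {E : 𝕜} (hψ : H *ᵥ ψ = E • ψ) :
    t * relativeDirichletForm G u ψ + ∑ α, ψ α ^ 2 / u α = (E + K) * ∑ α, ψ α ^ 2 := by
  have shifted_eq : H + K • 1 = hoppingHamiltonian G t fun α => V α + K := by
    rw [eq_hoppingHamiltonian G hH, hoppingHamiltonian_add_smul_one]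
  have shifted_eigenvector : (H + K • 1) *ᵥ ψ = (E + K) • ψ := by
    rw [add_mulVec, smul_mulVec, one_mulVec, hψ, add_smul]
  calc t * relativeDirichletForm G u ψ + ∑ α, ψ α ^ 2 / u α
    _ = ψ ⬝ᵥ (H + K • 1) *ᵥ ψ := by
      rw [shifted_eq, dotProduct_hoppingHamiltonian_mulVec G t _ hu_ne, ← shifted_eq, hu]
      simp only [mul_one]
    _ = (E + K) * ∑ α, ψ α ^ 2 := by
      rw [shifted_eigenvector, dotProduct_smul, smul_eq_mul]
      simp only [dotProduct, sq]

end QuadraticForm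

/-- The quadratic-form identity exhibiting `1/u` as an effective confining potential:
`t·Σ_{edges {α,β}} u α · u β · (ψ α/u α − ψ β/u β)² + Σ_α ψ α²/u α = E'·Σ_α ψ α²`,
the edge sum running over the unordered edges of `G`, each counted once. -/
theorem mbll_quadratic_form_identity
    {Ω : Type*} [Fintype Ω] [DecidableEq Ω] [Nonempty Ω]
    (G : SimpleGraph Ω) [DecidableRel G.Adj] (hG : G.Connected)
    (t : ℝ) (ht : 0 < t) (V : Ω → ℝ) (K : ℝ)
    (H : Matrix Ω Ω ℝ)
    (hH : ∀ α β, H α β = if α = β then V α else if G.Adj α β then -t else 0)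
    (hK : ∀ α, 0 ≤ K + V α - t * (G.degree α + 1))
    (u : Ω → ℝ) (hu : u = (H + K • (1 : Matrix Ω Ω ℝ))⁻¹ *ᵥ (fun _ => 1))
    (hupos : ∀ α, 0 < u α)
    (ψ : Ω → ℝ) (E : ℝ) (hψ : H *ᵥ ψ = E • ψ)
    (E' : ℝ) (hE' : E' = E + K) :
    t * ∑ e ∈ G.edgeFinset,
        Sym2.lift ⟨fun α β => u α * u β * (ψ α / u α - ψ β / u β) ^ 2,
          fun α β => by ring⟩ e
      + ∑ α, ψ α ^ 2 / u α = E' * ∑ α, ψ α ^ 2 := by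
  have hu_ne : u ≠ 0 := fun h => (hupos (Classical.arbitrary Ω)).ne' (congrFun h _)
  rw [hE']
  exact mbll_quadratic_form_identity_general G hH (mulVec_eq_of_eq_nonsing_inv_mulVec hu hu_ne)
    (fun α => (hupos α).ne') hψ
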